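/- Lifting of λσ-reductions to λπ: suppose (Γ ⊢ M) ⟹ U and U λσ-reduces to V in zero or more steps. Then there exists a judgement Σ ⊢ L such that Γ ⊢ M reduces to Σ ⊢ L by zero or more steps of the λπ-judgement reduction ⇝, Σ ⊢ L is a σπα-normal form with respect to ⇝, and (Σ ⊢ L) ⟹ σ(V), where σ(V) is the σ-normal form of V. -/

import Mathlib

/- Named terms and substitutions of the λπ-calculus. Variables are natural numbers. -/
mutual
inductive Tm : Type
  | var : ℕ → Tm
  | app : Tm → Tm → Tm
  | lam : ℕ → Tm → Tm
  | clos : Subst → Tm → Tm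
inductive Subst : Type
  | id : Subst
  | pi : ℕ → Subst
  | cons : Subst → Tm → ℕ → Subst
  | comp : Subst → Subst → Subst
end

/- Contexts are lists of variables; the head of the list is the *rightmost* variable,
so the context `Γ, a` of the paper is `a :: Γ`. -/
mutual
/-- `WfTm Γ M` is the judgement `Γ ⊢ M`. -/
inductive WfTm : List ℕ → Tm → Prop
  | var (Γ : List ℕ) (a : ℕ) : WfTm (a :: Γ) (.var a)
  | weak {Γ : List ℕ} {a : ℕ} (b : ℕ) : a ≠ b → WfTm Γ (.var a) → WfTm (b :: Γ) (.var a)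
  | app {Γ M N} : WfTm Γ M → WfTm Γ N → WfTm Γ (.app M N)
  | lam {Γ a M} : WfTm (a :: Γ) M → WfTm Γ (.lam a M)
  | clos {Γ s Δ M} : WfSub Γ s Δ → WfTm Δ M → WfTm Γ (.clos s M)
/-- `WfSub Γ s Δ` is the judgement `Γ ⊢ s ▷ Δ`. -/
inductive WfSub : List ℕ → Subst → List ℕ → Prop
  | id (Γ) : WfSub Γ .id Γ
  | pi (Γ a) : WfSub (a :: Γ) (.pi a) Γ
  | cons {Γ s Δ N} (a) : WfSub Γ s Δ → WfTm Γ N → WfSub Γ (.cons s N a) (a :: Δ)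
  | comp {Γ s Δ q Θ} : WfSub Γ s Δ → WfSub Δ q Θ → WfSub Γ (.comp s q) Θ
end

/-- The operator `O_{λa}` on sequences of finite sets (sequences are 0-indexed:
index `n` corresponds to the paper's index `n+1`). -/
def Olam (a : ℕ) (A : ℕ → Finset ℕ) : ℕ → Finset ℕ
  | 0 => (A 0).erase a ∪ A 1
  | n + 1 => A (n + 2)

/-- The operator `O_π`. -/
def Opi (A : ℕ → Finset ℕ) : ℕ → Finset ℕ
  | 0 => ∅
  | n + 1 => A n

mutual
/-- The free-variable sequence of a term: `FV M n` is the paper's `FV_{n+1}(M)`. -/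
def FV : Tm → ℕ → Finset ℕ
  | .var a => fun n => if n = 0 then {a} else ∅
  | .app M N => fun n => FV M n ∪ FV N n
  | .lam a M => Olam a (FV M)
  | .clos s M => Osub s (FV M)
/-- The operator `O_s` associated with a substitution `s`. -/
def Osub : Subst → (ℕ → Finset ℕ) → (ℕ → Finset ℕ)
  | .id => fun A => A
  | .pi _ => fun A => Opi A
  | .cons s N a => fun A n => Osub s (Olam a A) n ∪ FV N n
  | .comp s q => fun A => Osub s (Osub q A)
end

/-- Iterated abstraction `λΓ.M` (recall the head of the list is the rightmost variable). -/
def lamCtx : List ℕ → Tm → Tm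
  | [], M => M
  | a :: Γ, M => lamCtx Γ (.lam a M)

/-- Free variables of a judgement: `FV(Γ ⊢ M) = FV(λΓ.M)`. -/
def FVJ (Γ : List ℕ) (M : Tm) : ℕ → Finset ℕ := FV (lamCtx Γ M)

/-- Iterated lifting `⇑_Δ(s)`. -/
def Uparrow : List ℕ → Subst → Subst
  | [], s => s
  | a :: Δ, s => .cons (.comp (.pi a) (Uparrow Δ s)) (.var a) a

/- One-step reduction of the λπ-calculus (compatible closure).  The Boolean
parameter tells whether the rule `Beta` is allowed: `StepTm true` is λπ-reduction,
`StepTm false` is σπα-reduction. -/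
mutual
inductive StepTm : Bool → Tm → Tm → Prop
  | beta {a : ℕ} {M N : Tm} :
      StepTm true (.app (.lam a M) N) (.clos (.cons .id N a) M)
  | abs {β : Bool} {s : Subst} {a : ℕ} {M : Tm} :
      StepTm β (.clos s (.lam a M))
        (.lam a (.clos (.cons (.comp (.pi a) s) (.var a) a) M))
  | app {β : Bool} {s : Subst} {M N : Tm} :
      StepTm β (.clos s (.app M N)) (.app (.clos s M) (.clos s N))
  | consVar {β : Bool} {s : Subst} {N : Tm} {a : ℕ} :
      StepTm β (.clos (.cons s N a) (.var a)) N
  | new {β : Bool} {s : Subst} {N : Tm} {a b : ℕ} : a ≠ b →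
      StepTm β (.clos (.cons s N a) (.var b)) (.clos s (.var b))
  | idVar {β : Bool} {a : ℕ} : StepTm β (.clos .id (.var a)) (.var a)
  | clos {β : Bool} {s q : Subst} {M : Tm} :
      StepTm β (.clos s (.clos q M)) (.clos (.comp s q) M)
  | pi1 {β : Bool} {a b : ℕ} : a ≠ b → StepTm β (.clos (.pi a) (.var b)) (.var b)
  | pi2 {β : Bool} {s : Subst} {a b : ℕ} : a ≠ b →
      StepTm β (.clos (.comp s (.pi a)) (.var b)) (.clos s (.var b))
  | alpha1 {β : Bool} {a b : ℕ} {M : Tm} :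
      (∃ i, a ∈ FV (.lam a M) i) → (∀ i, b ∉ FV (.lam a M) i) →
      StepTm β (.lam a M) (.lam b (.clos (.cons (.pi b) (.var b) a) M))
  | lamCong {β : Bool} {a : ℕ} {M₁ M₂ : Tm} :
      StepTm β M₁ M₂ → StepTm β (.lam a M₁) (.lam a M₂)
  | appL {β : Bool} {M₁ M₂ N : Tm} : StepTm β M₁ M₂ → StepTm β (.app M₁ N) (.app M₂ N)
  | appR {β : Bool} {M N₁ N₂ : Tm} : StepTm β N₁ N₂ → StepTm β (.app M N₁) (.app M N₂)
  | closL {β : Bool} {s₁ s₂ : Subst} {M : Tm} :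
      StepSub β s₁ s₂ → StepTm β (.clos s₁ M) (.clos s₂ M)
  | closR {β : Bool} {s : Subst} {M₁ M₂ : Tm} :
      StepTm β M₁ M₂ → StepTm β (.clos s M₁) (.clos s M₂)
inductive StepSub : Bool → Subst → Subst → Prop
  | ass {β : Bool} {s q r : Subst} :
      StepSub β (.comp s (.comp q r)) (.comp (.comp s q) r)
  | idR {β : Bool} {s : Subst} : StepSub β (.comp s .id) s
  | idShift {β : Bool} {a : ℕ} : StepSub β (.comp .id (.pi a)) (.pi a)
  | consShift {β : Bool} {s : Subst} {N : Tm} {a : ℕ} :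
      StepSub β (.comp (.cons s N a) (.pi a)) s
  | map {β : Bool} {s q : Subst} {N : Tm} {a : ℕ} :
      StepSub β (.comp s (.cons q N a)) (.cons (.comp s q) (.clos s N) a)
  | consL {β : Bool} {s₁ s₂ : Subst} {N : Tm} {a : ℕ} :
      StepSub β s₁ s₂ → StepSub β (.cons s₁ N a) (.cons s₂ N a)
  | consR {β : Bool} {s : Subst} {N₁ N₂ : Tm} {a : ℕ} :
      StepTm β N₁ N₂ → StepSub β (.cons s N₁ a) (.cons s N₂ a)
  | compL {β : Bool} {s₁ s₂ q : Subst} :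
      StepSub β s₁ s₂ → StepSub β (.comp s₁ q) (.comp s₂ q)
  | compR {β : Bool} {s q₁ q₂ : Subst} :
      StepSub β q₁ q₂ → StepSub β (.comp s q₁) (.comp s q₂)
end

/-- One-step reduction `⇝` on judgements `Γ ⊢ M`, including the rule `α₂`.
`StepJ true` is λπ, `StepJ false` is σπα. -/
inductive StepJ (β : Bool) : List ℕ × Tm → List ℕ × Tm → Prop
  | step {Γ : List ℕ} {M₁ M₂ : Tm} : StepTm β M₁ M₂ → StepJ β (Γ, M₁) (Γ, M₂)
  | alpha2 {Γ Δ : List ℕ} {a b : ℕ} {M : Tm} :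
      (∃ i, a ∈ FVJ (Δ ++ [a]) M i) → (∀ i, b ∉ FVJ (Δ ++ [a]) M i) →
      StepJ β (Δ ++ a :: Γ, M)
        (Δ ++ b :: Γ, .clos (Uparrow Δ (.cons (.pi b) (.var b) a)) M)

/- Name-free (de Bruijn) terms and substitutions. -/
mutual
inductive NTm : Type
  | one : NTm
  | app : NTm → NTm → NTm
  | lam : NTm → NTm
  | clos : NSub → NTm → NTm
inductive NSub : Type
  | id : NSub
  | pi : NSub
  | cons : NSub → NTm → NSub
  | comp : NSub → NSub → NSub
end

/-- `piIter n` is the left-nested composition of `n+1` copies of `π`. -/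
def piIter : ℕ → NSub
  | 0 => .pi
  | k + 1 => .comp (piIter k) .pi

/-- `dbr n` is the de Bruijn index `n+1̲`: `dbr 0 = 1` and
`dbr (n+1) = ((…(π∘π)∘…)∘π)∘1` with `n+1` occurrences of `π`. -/
def dbr : ℕ → NTm
  | 0 => .one
  | n + 1 => .clos (piIter n) .one

/- One-step reduction of λσ (`NStepTm true`) resp. σ (`NStepTm false`)
on name-free terms/substitutions. -/
mutual
inductive NStepTm : Bool → NTm → NTm → Prop
  | beta {U V : NTm} : NStepTm true (.app (.lam U) V) (.clos (.cons .id V) U)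
  | abs {β : Bool} {u : NSub} {U : NTm} :
      NStepTm β (.clos u (.lam U)) (.lam (.clos (.cons (.comp .pi u) .one) U))
  | app {β : Bool} {u : NSub} {U V : NTm} :
      NStepTm β (.clos u (.app U V)) (.app (.clos u U) (.clos u V))
  | consVar {β : Bool} {u : NSub} {V : NTm} : NStepTm β (.clos (.cons u V) .one) V
  | idVar {β : Bool} : NStepTm β (.clos .id .one) .one
  | clos {β : Bool} {u v : NSub} {U : NTm} :
      NStepTm β (.clos u (.clos v U)) (.clos (.comp u v) U)
  | lamCong {β : Bool} {U₁ U₂ : NTm} : NStepTm β U₁ U₂ → NStepTm β (.lam U₁) (.lam U₂)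
  | appL {β : Bool} {U₁ U₂ V : NTm} : NStepTm β U₁ U₂ → NStepTm β (.app U₁ V) (.app U₂ V)
  | appR {β : Bool} {U V₁ V₂ : NTm} : NStepTm β V₁ V₂ → NStepTm β (.app U V₁) (.app U V₂)
  | closL {β : Bool} {u₁ u₂ : NSub} {U : NTm} :
      NStepSub β u₁ u₂ → NStepTm β (.clos u₁ U) (.clos u₂ U)
  | closR {β : Bool} {u : NSub} {U₁ U₂ : NTm} :
      NStepTm β U₁ U₂ → NStepTm β (.clos u U₁) (.clos u U₂)
inductive NStepSub : Bool → NSub → NSub → Prop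
  | ass {β : Bool} {u v w : NSub} : NStepSub β (.comp u (.comp v w)) (.comp (.comp u v) w)
  | idR {β : Bool} {u : NSub} : NStepSub β (.comp u .id) u
  | idShift {β : Bool} : NStepSub β (.comp .id .pi) .pi
  | consShift {β : Bool} {u : NSub} {V : NTm} : NStepSub β (.comp (.cons u V) .pi) u
  | map {β : Bool} {u v : NSub} {V : NTm} :
      NStepSub β (.comp u (.cons v V)) (.cons (.comp u v) (.clos u V))
  | consL {β : Bool} {u₁ u₂ : NSub} {V : NTm} :
      NStepSub β u₁ u₂ → NStepSub β (.cons u₁ V) (.cons u₂ V)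
  | consR {β : Bool} {u : NSub} {V₁ V₂ : NTm} :
      NStepTm β V₁ V₂ → NStepSub β (.cons u V₁) (.cons u V₂)
  | compL {β : Bool} {u₁ u₂ v : NSub} :
      NStepSub β u₁ u₂ → NStepSub β (.comp u₁ v) (.comp u₂ v)
  | compR {β : Bool} {u v₁ v₂ : NSub} :
      NStepSub β v₁ v₂ → NStepSub β (.comp u v₁) (.comp u v₂)
end

/- The correspondence `(Γ ⊢ M) ⟹ U` resp. `(Γ ⊢ s ▷ Δ) ⟹ u` between judgements and
name-free terms/substitutions (Definition 7.6 of the paper). -/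
mutual
inductive TrTm : List ℕ → Tm → NTm → Prop
  | var (Γ : List ℕ) (a : ℕ) : TrTm (a :: Γ) (.var a) (dbr 0)
  | weak {Γ : List ℕ} {a : ℕ} {n : ℕ} (b : ℕ) : a ≠ b →
      TrTm Γ (.var a) (dbr n) → TrTm (b :: Γ) (.var a) (dbr (n + 1))
  | app {Γ M N U V} : TrTm Γ M U → TrTm Γ N V → TrTm Γ (.app M N) (.app U V)
  | lam {Γ a M U} : TrTm (a :: Γ) M U → TrTm Γ (.lam a M) (.lam U)
  | clos {Γ s Δ M u U} : TrSub Γ s Δ u → TrTm Δ M U → TrTm Γ (.clos s M) (.clos u U)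
inductive TrSub : List ℕ → Subst → List ℕ → NSub → Prop
  | id (Γ) : TrSub Γ .id Γ .id
  | pi (Γ a) : TrSub (a :: Γ) (.pi a) Γ .pi
  | cons {Γ s Δ N u V} (a) : TrSub Γ s Δ u → TrTm Γ N V →
      TrSub Γ (.cons s N a) (a :: Δ) (.cons u V)
  | comp {Γ s Δ q Θ u v} : TrSub Γ s Δ u → TrSub Δ q Θ v →
      TrSub Γ (.comp s q) Θ (.comp u v)
end



namespace LP
open Relation

theorem starLift {α β : Type} {r : α → α → Prop} {p : β → β → Prop} (f : α → β)
    (hf : ∀ a b, r a b → p (f a) (f b)) {a b : α} (h : ReflTransGen r a b) :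
    ReflTransGen p (f a) (f b) := by
  induction h with
  | refl => exact .refl
  | tail _ h ih => exact ih.tail (hf _ _ h)

/-! ### Pure de Bruijn terms -/

inductive DB : Type
  | var : ℕ → DB
  | app : DB → DB → DB
  | lam : DB → DB

def upr (ξ : ℕ → ℕ) : ℕ → ℕ
  | 0 => 0
  | n + 1 => ξ n + 1

def ren (ξ : ℕ → ℕ) : DB → DB
  | .var n => .var (ξ n)
  | .app T S => .app (ren ξ T) (ren ξ S)
  | .lam T => .lam (ren (upr ξ) T)

def scons (T : DB) (θ : ℕ → DB) : ℕ → DB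
  | 0 => T
  | n + 1 => θ n

def ups (θ : ℕ → DB) : ℕ → DB := scons (.var 0) (fun n => ren Nat.succ (θ n))

def sb (θ : ℕ → DB) : DB → DB
  | .var n => θ n
  | .app T S => .app (sb θ T) (sb θ S)
  | .lam T => .lam (sb (ups θ) T)

theorem ups_var : ups DB.var = DB.var := by
  funext n; cases n <;> rfl

theorem sb_var (T : DB) : sb DB.var T = T := by
  induction T with
  | var n => rfl
  | app T S h1 h2 => simp [sb, h1, h2]
  | lam T h => simp [sb, ups_var, h]

theorem ups_ren (ξ : ℕ → ℕ) : ups (fun n => .var (ξ n)) = fun n => .var (upr ξ n) := by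
  funext n; cases n <;> rfl

theorem sb_ren_var (ξ : ℕ → ℕ) (T : DB) : sb (fun n => .var (ξ n)) T = ren ξ T := by
  induction T generalizing ξ with
  | var n => rfl
  | app T S h1 h2 => simp [sb, ren, h1, h2]
  | lam T h => simp [sb, ren, ups_ren, h]

theorem sb_of_ren (ξ : ℕ → ℕ) (θ : ℕ → DB) (T : DB) :
    sb θ (ren ξ T) = sb (fun n => θ (ξ n)) T := by
  induction T generalizing ξ θ with
  | var n => rfl
  | app T S h1 h2 => simp [sb, ren, h1, h2]
  | lam T h =>
    simp only [sb, ren, h]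
    congr 2
    funext n; cases n <;> rfl

theorem ren_ren (ξ ζ : ℕ → ℕ) (T : DB) : ren ζ (ren ξ T) = ren (fun n => ζ (ξ n)) T := by
  rw [← sb_ren_var ζ, sb_of_ren, sb_ren_var]

theorem ren_sb (ξ : ℕ → ℕ) (θ : ℕ → DB) (T : DB) :
    ren ξ (sb θ T) = sb (fun n => ren ξ (θ n)) T := by
  induction T generalizing ξ θ with
  | var n => rfl
  | app T S h1 h2 => simp [sb, ren, h1, h2]
  | lam T h =>
    simp only [sb, ren, h]
    congr 2
    funext n
    cases n with
    | zero => rfl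
    | succ n =>
      simp only [ups, scons, ren_ren]
      rfl

theorem sb_sb (θ η : ℕ → DB) (T : DB) : sb η (sb θ T) = sb (fun n => sb η (θ n)) T := by
  induction T generalizing θ η with
  | var n => rfl
  | app T S h1 h2 => simp [sb, h1, h2]
  | lam T h =>
    simp only [sb, h]
    congr 2
    funext n
    cases n with
    | zero => rfl
    | succ n =>
      simp only [ups, scons, sb_of_ren, ren_sb]

/-! ### Beta on de Bruijn terms -/

inductive Bt : DB → DB → Prop
  | beta {T S} : Bt (.app (.lam T) S) (sb (scons S .var) T)
  | lam {T T'} : Bt T T' → Bt (.lam T) (.lam T')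
  | appL {T T' S} : Bt T T' → Bt (.app T S) (.app T' S)
  | appR {T S S'} : Bt S S' → Bt (.app T S) (.app T S')

abbrev Bts := ReflTransGen Bt

theorem Bts.lam {T T'} (h : Bts T T') : Bts (.lam T) (.lam T') :=
  starLift DB.lam (fun _ _ h => Bt.lam h) h

theorem Bts.app {T T' S S'} (h : Bts T T') (h' : Bts S S') : Bts (.app T S) (.app T' S') :=
  (starLift (fun X => DB.app X S) (fun _ _ h => Bt.appL h) h).trans
    (starLift (fun X => DB.app T' X) (fun _ _ h => Bt.appR h) h')

theorem Bt.sb {T T'} (h : Bt T T') : ∀ θ, Bt (sb θ T) (sb θ T') := by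
  induction h with
  | @beta T S =>
    intro θ
    have : LP.sb θ (LP.sb (scons S .var) T) = LP.sb (scons (LP.sb θ S) .var) (LP.sb (ups θ) T) := by
      rw [sb_sb, sb_sb]
      congr 1
      funext n
      cases n with
      | zero => rfl
      | succ n =>
        simp only [ups, scons, sb_of_ren]
        exact (sb_var _).symm
    rw [this]
    exact Bt.beta
  | lam _ ih => intro θ; exact Bt.lam (ih _)
  | appL _ ih => intro θ; exact Bt.appL (ih _)
  | appR _ ih => intro θ; exact Bt.appR (ih _)

theorem Bts.sb {T T'} (h : Bts T T') (θ) : Bts (sb θ T) (sb θ T') :=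
  starLift (LP.sb θ) (fun _ _ (h : Bt _ _) => h.sb θ) h

theorem Bts.ren {T T'} (h : Bts T T') (ξ) : Bts (ren ξ T) (ren ξ T') := by
  rw [← sb_ren_var, ← sb_ren_var]; exact h.sb _

theorem Bts.sbs (T : DB) : ∀ {θ θ' : ℕ → DB}, (∀ n, Bts (θ n) (θ' n)) → Bts (LP.sb θ T) (LP.sb θ' T) := by
  induction T with
  | var n => intro θ θ' h; exact h n
  | app T S h1 h2 => intro θ θ' h; exact Bts.app (h1 h) (h2 h)
  | lam T ih =>
    intro θ θ' h
    refine Bts.lam (ih ?_)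
    intro n
    cases n with
    | zero => exact .refl
    | succ n => exact (h n).ren _

/-! ### Denotation of name-free terms -/

mutual
def dT : NTm → DB
  | .one => .var 0
  | .app U V => .app (dT U) (dT V)
  | .lam U => .lam (dT U)
  | .clos u U => sb (dS u) (dT U)
def dS : NSub → ℕ → DB
  | .id => DB.var
  | .pi => fun n => .var (n + 1)
  | .cons u V => scons (dT V) (dS u)
  | .comp u v => fun n => sb (dS u) (dS v n)
end

theorem dS_piIter (k n : ℕ) : dS (piIter k) n = .var (n + (k + 1)) := by
  induction k generalizing n with
  | zero => simp [piIter, dS]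
  | succ k ih => simp [piIter, dS, sb, ih]; omega

theorem dT_dbr (n : ℕ) : dT (dbr n) = .var n := by
  cases n with
  | zero => simp [dbr, dT]
  | succ n => simp [dbr, dT, sb, dS_piIter]

mutual
theorem stepT_d : ∀ {β U V}, NStepTm β U V → Bts (dT U) (dT V)
  | _, _, _, .beta => by simp only [dT, dS]; exact .single .beta
  | _, _, _, .abs => by
      simp only [dT, dS, sb]
      have : ∀ u, ups (dS u) = scons (.var 0) (fun n => sb (fun n => .var (n + 1)) (dS u n)) := by
        intro u; funext n; cases n with
        | zero => rfl
        | succ n => simp only [ups, scons]; exact (sb_ren_var _ _).symm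
      rw [this]
  | _, _, _, .app => by simp only [dT, sb]; exact .refl
  | _, _, _, .consVar => by simp only [dT, dS, sb, scons]; exact .refl
  | _, _, _, .idVar => by simp only [dT, dS, sb]; exact .refl
  | _, _, _, .clos => by simp only [dT, dS, sb_sb]; exact .refl
  | _, _, _, .lamCong h => by simp only [dT]; exact (stepT_d h).lam
  | _, _, _, .appL h => by simp only [dT]; exact (stepT_d h).app .refl
  | _, _, _, .appR h => by simp only [dT]; exact Bts.app .refl (stepT_d h)
  | _, _, _, .closL h => by simp only [dT]; exact Bts.sbs _ (stepS_d h)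
  | _, _, _, .closR h => by simp only [dT]; exact (stepT_d h).sb _
theorem stepS_d : ∀ {β u v}, NStepSub β u v → ∀ n, Bts (dS u n) (dS v n)
  | _, _, _, .ass => by intro n; simp only [dS, sb_sb]; exact .refl
  | _, _, _, .idR => by intro n; simp only [dS, sb]; exact .refl
  | _, _, _, .idShift => by intro n; simp only [dS, sb]; exact .refl
  | _, _, _, .consShift => by intro n; simp only [dS, sb, scons]; exact .refl
  | _, _, _, .map => by intro n; cases n <;> simp only [dS, scons, dT] <;> exact .refl
  | _, _, _, .consL h => by
      intro n
      cases n with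
      | zero => simp only [dS, scons]; exact .refl
      | succ n => simp only [dS, scons]; exact stepS_d h n
  | _, _, _, .consR h => by
      intro n
      cases n with
      | zero => simp only [dS, scons]; exact stepT_d h
      | succ n => simp only [dS, scons]; exact .refl
  | _, _, _, .compL h => by intro n; simp only [dS]; exact Bts.sbs _ (stepS_d h)
  | _, _, _, .compR h => by intro n; simp only [dS]; exact (stepS_d h n).sb _
end

theorem steps_d {U V} (h : ReflTransGen (NStepTm true) U V) : Bts (dT U) (dT V) := by
  induction h with
  | refl => exact .refl
  | tail _ h ih => exact ih.trans (stepT_d h)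

/-! ### Name-free normalization -/

def emb : DB → NTm
  | .var n => dbr n
  | .app T S => .app (emb T) (emb S)
  | .lam T => .lam (emb T)

theorem piIter_nf : ∀ k w, ¬ NStepSub false (piIter k) w
  | 0, _, h => by cases h
  | k + 1, _, h => by
      cases k with
      | zero =>
        simp only [piIter] at h
        cases h with
        | compL h => cases h
        | compR h => cases h
      | succ k =>
        rw [piIter] at h
        cases h with
        | compL h => exact piIter_nf _ _ h
        | compR h => cases h

theorem dbr_nf (n W) : ¬ NStepTm false (dbr n) W := by
  intro h
  cases n with
  | zero => simp only [dbr] at h; cases h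
  | succ n =>
    cases n with
    | zero =>
      simp only [dbr, piIter] at h
      cases h with
      | closL h => cases h
      | closR h => cases h
    | succ n =>
      simp only [dbr] at h
      rw [piIter] at h
      cases h with
      | closL h => exact piIter_nf (n + 1) _ h
      | closR h => cases h

theorem emb_nf (T : DB) : ∀ W, ¬ NStepTm false (emb T) W := by
  induction T with
  | var n => exact dbr_nf n
  | app T S h1 h2 =>
    intro W h
    simp only [emb] at h
    cases h with
    | appL h => exact h1 _ h
    | appR h => exact h2 _ h
  | lam T ih =>
    intro W h
    simp only [emb] at h
    cases h with
    | lamCong h => exact ih _ h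

abbrev NT := ReflTransGen (NStepTm false)
abbrev NS := ReflTransGen (NStepSub false)

theorem NT.lam {U U'} (h : NT U U') : NT (.lam U) (.lam U') :=
  starLift NTm.lam (fun _ _ h => .lamCong h) h
theorem NT.app {U U' V V'} (h : NT U U') (h' : NT V V') : NT (.app U V) (.app U' V') :=
  (starLift (fun X => NTm.app X V) (fun _ _ h => .appL h) h).trans
    (starLift (fun X => NTm.app U' X) (fun _ _ h => .appR h) h')
theorem NT.clos {u u' U U'} (h : NS u u') (h' : NT U U') : NT (.clos u U) (.clos u' U') :=
  (starLift (fun X => NTm.clos X U) (fun _ _ h => .closL h) h).trans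
    (starLift (fun X => NTm.clos u' X) (fun _ _ h => .closR h) h')
theorem NS.cons {u u' V V'} (h : NS u u') (h' : NT V V') : NS (.cons u V) (.cons u' V') :=
  (starLift (fun X => NSub.cons X V) (fun _ _ h => .consL h) h).trans
    (starLift (fun X => NSub.cons u' X) (fun _ _ h => .consR h) h')
theorem NS.comp {u u' v v'} (h : NS u u') (h' : NS v v') : NS (.comp u v) (.comp u' v') :=
  (starLift (fun X => NSub.comp X v) (fun _ _ h => .compL h) h).trans
    (starLift (fun X => NSub.comp u' X) (fun _ _ h => .compR h) h')

inductive NPath : NSub → ℕ → Prop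
  | id : NPath .id 0
  | pi : NPath .pi 1
  | comp {s k} : NPath s k → NPath (.comp s .pi) (k + 1)

inductive NNf : NTm → DB → Prop
  | one : NNf .one (.var 0)
  | path {p k} : NPath p k → NNf (.clos p .one) (.var k)
  | app {U V T S} : NNf U T → NNf V S → NNf (.app U V) (.app T S)
  | lam {U T} : NNf U T → NNf (.lam U) (.lam T)

inductive NNfS (P : DB → Prop) : NSub → (ℕ → DB) → Prop
  | path {p k} : NPath p k → NNfS P p (fun n => .var (n + k))
  | cons {s N T θ} : NNfS P s θ → NNf N T → P T → NNfS P (.cons s N) (scons T θ)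

theorem NNfS.shift {P s θ} (h : NNfS P s θ) :
    ∃ s', NS (.comp s .pi) s' ∧ NNfS P s' (fun n => θ (n + 1)) := by
  cases h with
  | @path _ k hp =>
    refine ⟨_, .refl, ?_⟩
    have := NNfS.path (P := P) hp.comp
    convert this using 3
    omega
  | cons h _ _ => exact ⟨_, .single .consShift, h⟩

theorem NNfS.compPath {P s θ p k} (h : NNfS P s θ) (hp : NPath p k) :
    ∃ s', NS (.comp s p) s' ∧ NNfS P s' (fun n => θ (n + k)) := by
  induction hp with
  | id => exact ⟨_, .single .idR, h⟩
  | pi => exact h.shift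
  | comp _ ih =>
    obtain ⟨s1, r1, n1⟩ := ih
    obtain ⟨s2, r2, n2⟩ := n1.shift
    refine ⟨s2, ReflTransGen.head .ass ((NS.comp r1 .refl).trans r2), ?_⟩
    convert n2 using 3
    omega

theorem NNfS.one {P s θ} (h : NNfS P s θ) : ∃ M, NT (.clos s .one) M ∧ NNf M (θ 0) := by
  cases h with
  | path hp => refine ⟨_, .refl, ?_⟩; simpa using NNf.path hp
  | cons h hN _ => exact ⟨_, .single .consVar, hN⟩

theorem NNfS.var {P s θ M k} (h : NNfS P s θ) (hM : NNf M (.var k)) :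
    ∃ M', NT (.clos s M) M' ∧ NNf M' (θ k) := by
  cases hM with
  | one => exact h.one
  | path hp =>
    obtain ⟨s1, r1, n1⟩ := h.compPath hp
    obtain ⟨M, r2, n2⟩ := n1.one
    refine ⟨M, ReflTransGen.head .clos ((NT.clos r1 .refl).trans r2), ?_⟩
    simpa using n2

def NWk (P : DB → Prop) : Prop := (∀ n, P (.var n)) ∧ ∀ N T, NNf N T → P T →
  ∃ N', NT (.clos .pi N) N' ∧ NNf N' (ren Nat.succ T) ∧ P (ren Nat.succ T)

theorem NNfS.wk {P s θ} (hP : NWk P) (h : NNfS P s θ) :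
    ∃ s', NS (.comp .pi s) s' ∧ NNfS P s' (fun n => ren Nat.succ (θ n)) := by
  induction h with
  | @path p k hp =>
    obtain ⟨s', r, n⟩ := (NNfS.path (P := P) NPath.pi).compPath hp
    exact ⟨s', r, n⟩
  | @cons s N T θ h hN hT ih =>
    obtain ⟨s', r, n⟩ := ih
    obtain ⟨N', r', n', p'⟩ := hP.2 _ _ hN hT
    refine ⟨_, ReflTransGen.head .map (NS.cons r r'), ?_⟩
    convert NNfS.cons n n' p' using 1
    funext n; cases n <;> rfl

theorem NNf.clos {P M T} (hP : NWk P) (hM : NNf M T) : ∀ {s θ}, NNfS P s θ →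
    ∃ M', NT (.clos s M) M' ∧ NNf M' (sb θ T) := by
  induction hM with
  | one => intro s θ h; exact h.var .one
  | path hp => intro s θ h; exact h.var (.path hp)
  | app _ _ ih1 ih2 =>
    intro s θ h
    obtain ⟨M1, r1, n1⟩ := ih1 h
    obtain ⟨M2, r2, n2⟩ := ih2 h
    exact ⟨_, ReflTransGen.head .app (NT.app r1 r2), n1.app n2⟩
  | lam _ ih =>
    intro s θ h
    obtain ⟨s', r, n⟩ := h.wk hP
    obtain ⟨M', r', n'⟩ := ih (NNfS.cons n NNf.one (hP.1 0))
    exact ⟨_, ReflTransGen.head .abs (NT.lam ((NT.clos (NS.cons r .refl) .refl).trans r')), n'.lam⟩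

def IsVar (T : DB) : Prop := ∃ n, T = .var n
def Any (_ : DB) : Prop := True

theorem nwk_isVar : NWk IsVar := by
  refine ⟨fun n => ⟨n, rfl⟩, ?_⟩
  rintro N _ hN ⟨n, rfl⟩
  obtain ⟨M', r, h⟩ := (NNfS.path (P := Any) NPath.pi).var hN
  exact ⟨M', r, h, ⟨_, rfl⟩⟩

theorem nwk_any : NWk Any := by
  refine ⟨fun n => trivial, ?_⟩
  intro N T hN _
  obtain ⟨M', r, h⟩ := hN.clos nwk_isVar (NNfS.path NPath.pi)
  exact ⟨M', r, by rw [← sb_ren_var]; exact h, trivial⟩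

theorem NNfS.comp {s θ q η} (h : NNfS Any s θ) (hq : NNfS Any q η) :
    ∃ s', NS (.comp s q) s' ∧ NNfS Any s' (fun n => sb θ (η n)) := by
  induction hq with
  | path hp => exact h.compPath hp
  | @cons _ N T θ' _ hN _ ih =>
    obtain ⟨s', r, n⟩ := ih
    obtain ⟨N', r', n'⟩ := hN.clos nwk_any h
    refine ⟨_, ReflTransGen.head .map (NS.cons r r'), ?_⟩
    convert NNfS.cons n n' trivial using 1
    funext n; cases n <;> rfl

mutual
theorem nnorm : ∀ U : NTm, ∃ M, NT U M ∧ NNf M (dT U)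
  | .one => ⟨_, .refl, by rw [dT]; exact .one⟩
  | .app U V => by
      obtain ⟨M1, r1, n1⟩ := nnorm U
      obtain ⟨M2, r2, n2⟩ := nnorm V
      exact ⟨_, NT.app r1 r2, by rw [dT]; exact n1.app n2⟩
  | .lam U => by
      obtain ⟨M1, r1, n1⟩ := nnorm U
      exact ⟨_, NT.lam r1, by rw [dT]; exact n1.lam⟩
  | .clos u U => by
      obtain ⟨s, r1, n1⟩ := nnormS u
      obtain ⟨M2, r2, n2⟩ := nnorm U
      obtain ⟨M3, r3, n3⟩ := n2.clos nwk_any n1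
      exact ⟨_, (NT.clos r1 r2).trans r3, by rw [dT]; exact n3⟩
theorem nnormS : ∀ u : NSub, ∃ s, NS u s ∧ NNfS Any s (dS u)
  | .id => ⟨_, .refl, by rw [dS]; exact .path .id⟩
  | .pi => ⟨_, .refl, by rw [dS]; exact .path .pi⟩
  | .cons u V => by
      obtain ⟨s, r1, n1⟩ := nnormS u
      obtain ⟨M2, r2, n2⟩ := nnorm V
      exact ⟨_, NS.cons r1 r2, by rw [dS]; exact .cons n1 n2 trivial⟩
  | .comp u v => by
      obtain ⟨s, r1, n1⟩ := nnormS u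
      obtain ⟨q, r2, n2⟩ := nnormS v
      obtain ⟨t, r3, n3⟩ := n1.comp n2
      exact ⟨_, (NS.comp r1 r2).trans r3, by rw [dS]; exact n3⟩
end

theorem NPath.red {p k} (h : NPath p k) : (k = 0 ∧ p = .id) ∨ ∃ j, k = j + 1 ∧ NS p (piIter j) := by
  induction h with
  | id => exact .inl ⟨rfl, rfl⟩
  | pi => exact .inr ⟨0, rfl, .refl⟩
  | comp _ ih =>
    rcases ih with ⟨rfl, rfl⟩ | ⟨j, rfl, r⟩
    · exact .inr ⟨0, rfl, .single .idShift⟩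
    · exact .inr ⟨j + 1, rfl, NS.comp r .refl⟩

theorem NNf.red {M T} (h : NNf M T) : NT M (emb T) := by
  induction h with
  | one => exact .refl
  | path hp =>
    rcases hp.red with ⟨rfl, rfl⟩ | ⟨j, rfl, r⟩
    · exact .single .idVar
    · exact NT.clos r .refl
  | app _ _ h1 h2 => exact NT.app h1 h2
  | lam _ h => exact NT.lam h

theorem nred (U : NTm) : NT U (emb (dT U)) := by
  obtain ⟨M, r, n⟩ := nnorm U
  exact r.trans n.red

/-! ### Named normalization -/

abbrev ST := ReflTransGen (StepTm true)
abbrev SS := ReflTransGen (StepSub true)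

theorem ST.lam {a U U'} (h : ST U U') : ST (.lam a U) (.lam a U') :=
  starLift (Tm.lam a) (fun _ _ h => .lamCong h) h
theorem ST.app {U U' V V'} (h : ST U U') (h' : ST V V') : ST (.app U V) (.app U' V') :=
  (starLift (fun X => Tm.app X V) (fun _ _ h => .appL h) h).trans
    (starLift (fun X => Tm.app U' X) (fun _ _ h => .appR h) h')
theorem ST.clos {u u' U U'} (h : SS u u') (h' : ST U U') : ST (.clos u U) (.clos u' U') :=
  (starLift (fun X => Tm.clos X U) (fun _ _ h => .closL h) h).trans
    (starLift (fun X => Tm.clos u' X) (fun _ _ h => .closR h) h')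
theorem SS.cons {u u' V V' a} (h : SS u u') (h' : ST V V') : SS (.cons u V a) (.cons u' V' a) :=
  (starLift (fun X => Subst.cons X V a) (fun _ _ h => .consL h) h).trans
    (starLift (fun X => Subst.cons u' X a) (fun _ _ h => .consR h) h')
theorem SS.comp {u u' v v'} (h : SS u u') (h' : SS v v') : SS (.comp u v) (.comp u' v') :=
  (starLift (fun X => Subst.comp X v) (fun _ _ h => .compL h) h).trans
    (starLift (fun X => Subst.comp u' X) (fun _ _ h => .compR h) h')

inductive Idx : List ℕ → ℕ → ℕ → Prop
  | zero {Γ b} : Idx (b :: Γ) b 0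
  | succ {Γ b c m} : b ≠ c → Idx Γ b m → Idx (c :: Γ) b (m + 1)

inductive PathR : List ℕ → Subst → List ℕ → ℕ → Prop
  | id {Γ} : PathR Γ .id Γ 0
  | pi {Γ a} : PathR (a :: Γ) (.pi a) Γ 1
  | comp {Γ s a Δ k} : PathR Γ s (a :: Δ) k → PathR Γ (.comp s (.pi a)) Δ (k + 1)

inductive Nf : List ℕ → Tm → DB → Prop
  | var {Γ b m} : Idx Γ b m → Nf Γ (.var b) (.var m)
  | path {Γ p Δ k b m} : PathR Γ p Δ k → Idx Δ b m → Nf Γ (.clos p (.var b)) (.var (m + k))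
  | app {Γ M N T S} : Nf Γ M T → Nf Γ N S → Nf Γ (.app M N) (.app T S)
  | lam {Γ a M T} : Nf (a :: Γ) M T → Nf Γ (.lam a M) (.lam T)

inductive NfS (P : DB → Prop) : List ℕ → Subst → List ℕ → (ℕ → DB) → Prop
  | path {Γ p Δ k} : PathR Γ p Δ k → NfS P Γ p Δ (fun n => .var (n + k))
  | cons {Γ s Δ N a T θ} : NfS P Γ s Δ θ → Nf Γ N T → P T →
      NfS P Γ (.cons s N a) (a :: Δ) (scons T θ)

theorem NfS.shift {P Γ s a Δ θ} (h : NfS P Γ s (a :: Δ) θ) :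
    ∃ s', SS (.comp s (.pi a)) s' ∧ NfS P Γ s' Δ (fun n => θ (n + 1)) := by
  cases h with
  | @path _ _ k hp =>
    refine ⟨_, .refl, ?_⟩
    have := NfS.path (P := P) hp.comp
    convert this using 3
    omega
  | cons h _ _ => exact ⟨_, .single .consShift, h⟩

theorem NfS.compPath {P Γ s Δ θ p Δ' k} (h : NfS P Γ s Δ θ) (hp : PathR Δ p Δ' k) :
    ∃ s', SS (.comp s p) s' ∧ NfS P Γ s' Δ' (fun n => θ (n + k)) := by
  induction hp with
  | id => exact ⟨_, .single .idR, h⟩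
  | pi => exact h.shift
  | comp _ ih =>
    obtain ⟨s1, r1, n1⟩ := ih h
    obtain ⟨s2, r2, n2⟩ := n1.shift
    refine ⟨s2, ReflTransGen.head .ass ((SS.comp r1 .refl).trans r2), ?_⟩
    convert n2 using 3
    omega

theorem NfS.idx {P Γ s Δ θ} (h : NfS P Γ s Δ θ) : ∀ {b m}, Idx Δ b m →
    ∃ M, ST (.clos s (.var b)) M ∧ Nf Γ M (θ m) := by
  induction h with
  | path hp => intro b m hi; exact ⟨_, .refl, .path hp hi⟩
  | cons h hN _ ih =>
    intro b m hi
    cases hi with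
    | zero => exact ⟨_, .single .consVar, hN⟩
    | succ hne hi =>
      obtain ⟨M, r, n⟩ := ih hi
      exact ⟨M, ReflTransGen.head (.new hne.symm) r, n⟩

theorem NfS.var {P Γ s Δ θ M k} (h : NfS P Γ s Δ θ) (hM : Nf Δ M (.var k)) :
    ∃ M', ST (.clos s M) M' ∧ Nf Γ M' (θ k) := by
  cases hM with
  | var hi => exact h.idx hi
  | path hp hi =>
    obtain ⟨s1, r1, n1⟩ := h.compPath hp
    obtain ⟨M, r2, n2⟩ := n1.idx hi
    exact ⟨M, ReflTransGen.head .clos ((ST.clos r1 .refl).trans r2), n2⟩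

def Wk (P : DB → Prop) : Prop := (∀ n, P (.var n)) ∧ ∀ Γ a N T, Nf Γ N T → P T →
  ∃ N', ST (.clos (.pi a) N) N' ∧ Nf (a :: Γ) N' (ren Nat.succ T) ∧ P (ren Nat.succ T)

theorem NfS.wk {P Γ s Δ θ} (a : ℕ) (hP : Wk P) (h : NfS P Γ s Δ θ) :
    ∃ s', SS (.comp (.pi a) s) s' ∧ NfS P (a :: Γ) s' Δ (fun n => ren Nat.succ (θ n)) := by
  induction h with
  | @path p Δ k hp =>
    obtain ⟨s', r, n⟩ := (NfS.path (P := P) (PathR.pi (a := a) (Γ := Γ))).compPath hp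
    exact ⟨s', r, n⟩
  | cons h hN hT ih =>
    obtain ⟨s', r, n⟩ := ih
    obtain ⟨N', r', n', p'⟩ := hP.2 _ a _ _ hN hT
    refine ⟨_, ReflTransGen.head .map (SS.cons r r'), ?_⟩
    convert NfS.cons n n' p' using 1
    funext n; cases n <;> rfl

theorem Nf.clos {P Δ M T} (hP : Wk P) (hM : Nf Δ M T) : ∀ {Γ s θ}, NfS P Γ s Δ θ →
    ∃ M', ST (.clos s M) M' ∧ Nf Γ M' (sb θ T) := by
  induction hM with
  | var hi => intro Γ s θ h; exact h.var (.var hi)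
  | path hp hi => intro Γ s θ h; exact h.var (.path hp hi)
  | app _ _ ih1 ih2 =>
    intro Γ s θ h
    obtain ⟨M1, r1, n1⟩ := ih1 h
    obtain ⟨M2, r2, n2⟩ := ih2 h
    exact ⟨_, ReflTransGen.head .app (ST.app r1 r2), n1.app n2⟩
  | @lam _ a _ _ _ ih =>
    intro Γ s θ h
    obtain ⟨s', r, n⟩ := h.wk a hP
    obtain ⟨M', r', n'⟩ := ih (NfS.cons (a := a) n (Nf.var Idx.zero) (hP.1 0))
    exact ⟨_, ReflTransGen.head .abs (ST.lam ((ST.clos (SS.cons r .refl) .refl).trans r')), n'.lam⟩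

theorem wk_isVar : Wk IsVar := by
  refine ⟨fun n => ⟨n, rfl⟩, ?_⟩
  rintro Γ a N _ hN ⟨n, rfl⟩
  obtain ⟨M', r, h⟩ := (NfS.path (P := Any) (PathR.pi (a := a))).var hN
  exact ⟨M', r, h, ⟨_, rfl⟩⟩

theorem wk_any : Wk Any := by
  refine ⟨fun n => trivial, ?_⟩
  intro Γ a N T hN _
  obtain ⟨M', r, h⟩ := hN.clos wk_isVar (NfS.path (PathR.pi (a := a)))
  exact ⟨M', r, by rw [← sb_ren_var]; exact h, trivial⟩

theorem NfS.comp {Γ s Δ θ q Ξ η} (h : NfS Any Γ s Δ θ) (hq : NfS Any Δ q Ξ η) :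
    ∃ s', SS (.comp s q) s' ∧ NfS Any Γ s' Ξ (fun n => sb θ (η n)) := by
  induction hq with
  | path hp => exact h.compPath hp
  | cons _ hN _ ih =>
    obtain ⟨s', r, n⟩ := ih
    obtain ⟨N', r', n'⟩ := hN.clos wk_any h
    refine ⟨_, ReflTransGen.head .map (SS.cons r r'), ?_⟩
    convert NfS.cons n n' trivial using 1
    funext n; cases n <;> rfl

theorem tr_var_idx {Γ a n} (h : Idx Γ a n) : TrTm Γ (.var a) (dbr n) := by
  induction h with
  | zero => exact .var _ _
  | succ hne _ ih => exact .weak _ hne ih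

theorem idx_of_tr : ∀ {Γ a U}, TrTm Γ (.var a) U → ∃ n, U = dbr n ∧ Idx Γ a n
  | _, _, _, .var _ _ => ⟨0, rfl, .zero⟩
  | _, _, _, @TrTm.weak Γ a n b hne h => by
      obtain ⟨m, e, hi⟩ := idx_of_tr h
      have : n = m := by
        have := congrArg dT e
        rw [dT_dbr, dT_dbr] at this
        cases this; rfl
      subst this
      exact ⟨_, rfl, .succ hne hi⟩

mutual
theorem norm : ∀ {Γ M U}, TrTm Γ M U → ∃ M', ST M M' ∧ Nf Γ M' (dT U)
  | _, _, _, .var Γ a => ⟨_, .refl, by rw [dT_dbr]; exact .var .zero⟩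
  | _, _, _, .weak b hne h => by
      obtain ⟨m, e, hi⟩ := idx_of_tr (TrTm.weak b hne h)
      exact ⟨_, .refl, by rw [e, dT_dbr]; exact .var hi⟩
  | _, _, _, .app h1 h2 => by
      obtain ⟨M1, r1, n1⟩ := norm h1
      obtain ⟨M2, r2, n2⟩ := norm h2
      exact ⟨_, ST.app r1 r2, by rw [dT]; exact n1.app n2⟩
  | _, _, _, .lam h => by
      obtain ⟨M1, r1, n1⟩ := norm h
      exact ⟨_, ST.lam r1, by rw [dT]; exact n1.lam⟩
  | _, _, _, .clos h1 h2 => by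
      obtain ⟨s, r1, n1⟩ := normS h1
      obtain ⟨M2, r2, n2⟩ := norm h2
      obtain ⟨M3, r3, n3⟩ := n2.clos wk_any n1
      exact ⟨_, (ST.clos r1 r2).trans r3, by rw [dT]; exact n3⟩
theorem normS : ∀ {Γ s Δ u}, TrSub Γ s Δ u → ∃ s', SS s s' ∧ NfS Any Γ s' Δ (dS u)
  | _, _, _, _, .id _ => ⟨_, .refl, by rw [dS]; exact .path .id⟩
  | _, _, _, _, .pi _ _ => ⟨_, .refl, by rw [dS]; exact .path .pi⟩
  | _, _, _, _, .cons a h1 h2 => by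
      obtain ⟨s, r1, n1⟩ := normS h1
      obtain ⟨M2, r2, n2⟩ := norm h2
      exact ⟨_, SS.cons r1 r2, by rw [dS]; exact .cons n1 n2 trivial⟩
  | _, _, _, _, .comp h1 h2 => by
      obtain ⟨s, r1, n1⟩ := normS h1
      obtain ⟨q, r2, n2⟩ := normS h2
      obtain ⟨t, r3, n3⟩ := n1.comp n2
      exact ⟨_, (SS.comp r1 r2).trans r3, by rw [dS]; exact n3⟩
end

/-! ### Free variables and renaming -/

def fr : DB → ℕ → Prop
  | .var n, q => q = n
  | .app T S, q => fr T q ∨ fr S q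
  | .lam T, q => fr T (q + 1)

theorem Idx.get {Γ b m} (h : Idx Γ b m) : Γ[m]? = some b := by
  induction h with
  | zero => rfl
  | succ _ _ ih => simpa using ih

theorem Idx.mem {Γ b m} (h : Idx Γ b m) : b ∈ Γ := List.mem_of_getElem? h.get

theorem PathR.drop {Γ p Δ k} (h : PathR Γ p Δ k) : Γ.drop k = Δ := by
  induction h with
  | id => rfl
  | pi => rfl
  | comp _ ih => rw [← List.drop_drop, ih]; rfl

theorem PathR.osub {Γ p Δ k} (h : PathR Γ p Δ k) : ∀ A : ℕ → Finset ℕ,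
    (∀ n, Osub p A (n + k) = A n) ∧ ∀ n x, x ∈ Osub p A n → ∃ m, n = m + k ∧ x ∈ A m := by
  induction h with
  | id => intro A; simp only [Osub]; exact ⟨fun n => rfl, fun n x h => ⟨n, rfl, h⟩⟩
  | pi =>
    intro A; simp only [Osub]
    refine ⟨fun n => rfl, fun n x h => ?_⟩
    cases n with
    | zero => simp [Opi] at h
    | succ n => exact ⟨n, rfl, h⟩
  | @comp _ _ _ _ k _ ih =>
    intro A; simp only [Osub]
    refine ⟨fun n => ?_, fun n x h => ?_⟩
    · have := (ih (Opi A)).1 (n + 1)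
      rw [show n + (k + 1) = n + 1 + k by omega, this]; rfl
    · obtain ⟨m, e, hm⟩ := (ih (Opi A)).2 n x h
      cases m with
      | zero => simp [Opi] at hm
      | succ m => exact ⟨m, by omega, hm⟩

theorem Nf.fv_drop {Γ M T} (h : Nf Γ M T) : ∀ i x, x ∈ FV M i → x ∈ Γ.drop i := by
  induction h with
  | var hi =>
    intro i x hx
    simp only [FV] at hx
    split_ifs at hx with h0
    · rw [Finset.mem_singleton] at hx; subst hx; subst h0; exact hi.mem
    · simp at hx
  | path hp hi =>
    intro i x hx
    simp only [FV] at hx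
    obtain ⟨m, e, hm⟩ := (hp.osub _).2 _ _ hx
    split_ifs at hm with h0
    · rw [Finset.mem_singleton] at hm; subst hm; subst h0; subst e
      have := hi.mem
      rw [← hp.drop] at this
      simpa using this
    · simp at hm
  | app _ _ h1 h2 =>
    intro i x hx
    simp only [FV, Finset.mem_union] at hx
    exact hx.elim (h1 i x) (h2 i x)
  | @lam Γ a M T hM ih =>
    intro i x hx
    simp only [FV] at hx
    cases i with
    | zero =>
      simp only [Olam, Finset.mem_union, Finset.mem_erase] at hx
      rcases hx with ⟨hne, hx⟩ | hx
      · have := ih 0 x hx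
        simpa [hne] using this
      · exact ih 1 x hx
    | succ i => exact ih (i + 2) x hx

theorem Nf.fv_sub {Γ M T} (h : Nf Γ M T) {i x} (hx : x ∈ FV M i) : x ∈ Γ :=
  List.mem_of_mem_drop (h.fv_drop i x hx)

theorem Nf.fv_pos {Γ M T} (h : Nf Γ M T) : ∀ q, fr T q →
    ∃ b i m, b ∈ FV M i ∧ q = m + i ∧ Idx (Γ.drop i) b m := by
  induction h with
  | @var Γ b m hi =>
    intro q hq
    simp only [fr] at hq
    exact ⟨b, 0, m, by simp [FV], hq, hi⟩
  | @path Γ p Δ k b m hp hi =>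
    intro q hq
    simp only [fr] at hq
    refine ⟨b, k, m, ?_, hq, by rw [hp.drop]; exact hi⟩
    have := (hp.osub (FV (.var b))).1 0
    rw [zero_add] at this
    rw [FV, this]
    simp [FV]
  | app _ _ h1 h2 =>
    intro q hq
    simp only [fr] at hq
    rcases hq with hq | hq
    · obtain ⟨b, i, m, hb, r⟩ := h1 q hq
      exact ⟨b, i, m, by simp [FV, hb], r⟩
    · obtain ⟨b, i, m, hb, r⟩ := h2 q hq
      exact ⟨b, i, m, by simp [FV, hb], r⟩
  | @lam Γ a M T hM ih =>
    intro q hq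
    simp only [fr] at hq
    obtain ⟨b, i, m, hb, e, hi⟩ := ih _ hq
    cases i with
    | zero =>
      simp only [List.drop_zero] at hi
      cases hi with
      | zero => omega
      | @succ _ _ _ m hne hi =>
        exact ⟨b, 0, m, by simp [FV, Olam, hb, hne], by omega, hi⟩
    | succ i =>
      refine ⟨b, i, m, ?_, by omega, hi⟩
      cases i with
      | zero => simp [FV, Olam, hb]
      | succ i => simpa [FV, Olam] using hb

theorem Nf.fv_idx {Γ M T q a} (h : Nf Γ M T) (hq : fr T q) (ha : Idx Γ a q) :
    ∃ i, a ∈ FV M i := by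
  obtain ⟨b, i, m, hb, e, hi⟩ := h.fv_pos q hq
  have h1 := hi.get
  have h2 := ha.get
  rw [List.getElem?_drop, show i + m = q by omega, h2] at h1
  cases h1
  exact ⟨i, hb⟩

theorem PathR.red {Γ p Δ k} (h : PathR Γ p Δ k) : ∀ {b m}, Idx Γ b (m + k) →
    Idx Δ b m ∧ ST (.clos p (.var b)) (.var b) := by
  induction h with
  | id => intro b m hi; exact ⟨hi, .single .idVar⟩
  | pi =>
    intro b m hi
    cases hi with
    | succ hne hi => exact ⟨hi, .single (.pi1 hne.symm)⟩
  | @comp _ _ _ _ k _ ih =>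
    intro b m hi
    rw [show m + (k + 1) = m + 1 + k by omega] at hi
    obtain ⟨h1, r⟩ := ih hi
    cases h1 with
    | succ hne h1 => exact ⟨h1, ReflTransGen.head (.pi2 hne.symm) r⟩

/-- Pure named terms representing de Bruijn terms. -/
inductive Pu : List ℕ → Tm → DB → Prop
  | var {Γ b m} : Idx Γ b m → Pu Γ (.var b) (.var m)
  | app {Γ M N T S} : Pu Γ M T → Pu Γ N S → Pu Γ (.app M N) (.app T S)
  | lam {Γ a M T} : Pu (a :: Γ) M T → Pu Γ (.lam a M) (.lam T)

theorem fresh (Γ : List ℕ) : ∃ b, b ∉ Γ := by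
  obtain ⟨b, hb⟩ := Infinite.exists_notMem_finset Γ.toFinset
  exact ⟨b, by simpa using hb⟩

theorem nfS_rename (Γ : List ℕ) (a b : ℕ) :
    NfS IsVar (b :: Γ) (.cons (.pi b) (.var b) a) (a :: Γ) DB.var := by
  have := NfS.cons (P := IsVar) (a := a) (NfS.path (PathR.pi (Γ := Γ) (a := b)))
    (Nf.var Idx.zero) ⟨0, rfl⟩
  convert this using 1
  funext n; cases n <;> rfl

theorem Pu.exists_of_nf (T : DB) : ∀ {Γ M}, Nf Γ M T → (∀ q, fr T q → ∃ b, Idx Γ b q) →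
    ∃ L, ST M L ∧ Pu Γ L T := by
  induction T with
  | var n =>
    intro Γ M h hg
    cases h with
    | var hi => exact ⟨_, .refl, .var hi⟩
    | @path _ p Δ k b m hp hi =>
      obtain ⟨c, hc⟩ := hg (m + k) rfl
      obtain ⟨h1, r⟩ := hp.red hc
      have e1 := h1.get
      rw [hi.get] at e1
      cases e1
      exact ⟨_, r, .var hc⟩
  | app T S ih1 ih2 =>
    intro Γ M h hg
    cases h with
    | app h1 h2 =>
      obtain ⟨L1, r1, p1⟩ := ih1 h1 (fun q hq => hg q (.inl hq))
      obtain ⟨L2, r2, p2⟩ := ih2 h2 (fun q hq => hg q (.inr hq))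
      exact ⟨_, ST.app r1 r2, .app p1 p2⟩
  | lam T ih =>
    intro Γ M h hg
    cases h with
    | @lam _ a M _ h =>
      by_cases hbad : ∃ q, fr T (q + 1) ∧ Idx Γ a q
      · obtain ⟨q, hq, hi⟩ := hbad
        obtain ⟨b, hb⟩ := fresh Γ
        obtain ⟨M', r, n⟩ := h.clos wk_isVar (nfS_rename Γ a b)
        rw [sb_var] at n
        obtain ⟨L, r', p⟩ := ih n (by
          intro q hq
          cases q with
          | zero => exact ⟨b, .zero⟩
          | succ q =>
            obtain ⟨c, hc⟩ := hg q hq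
            exact ⟨c, .succ (fun e => hb (e ▸ hc.mem)) hc⟩)
        refine ⟨_, ReflTransGen.head (.alpha1 (b := b) ?_ ?_) (ST.lam (r.trans r')), .lam p⟩
        · exact h.lam.fv_idx (T := .lam T) hq hi
        · intro i hi; exact hb (h.lam.fv_sub hi)
      · obtain ⟨L, r', p⟩ := ih h (by
          intro q hq
          cases q with
          | zero => exact ⟨a, .zero⟩
          | succ q =>
            obtain ⟨c, hc⟩ := hg q hq
            exact ⟨c, .succ (fun e => hbad ⟨q, hq, e ▸ hc⟩) hc⟩)
        exact ⟨_, ST.lam r', .lam p⟩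

/-! ### Contexts -/

def lams : ℕ → DB → DB
  | 0, T => T
  | n + 1, T => lams n (.lam T)

theorem fr_lams (n : ℕ) : ∀ T q, fr (lams n T) q ↔ fr T (n + q) := by
  induction n with
  | zero => intro T q; simp [lams]
  | succ n ih =>
    intro T q
    simp only [lams, ih, fr]
    rw [show n + q + 1 = n + 1 + q by omega]

theorem nf_lamCtx (Δ : List ℕ) : ∀ {Γ M T}, Nf (Δ ++ Γ) M T →
    Nf Γ (lamCtx Δ M) (lams Δ.length T) := by
  induction Δ with
  | nil => intro Γ M T h; exact h
  | cons a Δ ih => intro Γ M T h; exact ih (Nf.lam h)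

theorem lamCtx_snoc (Δ : List ℕ) (a : ℕ) : ∀ M, lamCtx (Δ ++ [a]) M = .lam a (lamCtx Δ M) := by
  induction Δ with
  | nil => intro M; rfl
  | cons c Δ ih => intro M; exact ih _

theorem nfS_uparrow (Δ : List ℕ) {Γ Γ' s} (h : NfS IsVar Γ s Γ' DB.var) :
    ∃ s', SS (Uparrow Δ s) s' ∧ NfS IsVar (Δ ++ Γ) s' (Δ ++ Γ') DB.var := by
  induction Δ with
  | nil => exact ⟨s, .refl, h⟩
  | cons a Δ ih =>
    obtain ⟨s1, r1, n1⟩ := ih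
    obtain ⟨s2, r2, n2⟩ := n1.wk a wk_isVar
    refine ⟨_, SS.cons ((SS.comp .refl r1).trans r2) .refl, ?_⟩
    have := NfS.cons (a := a) n2 (Nf.var Idx.zero) ⟨0, rfl⟩
    have e : scons (.var 0) (fun n => ren Nat.succ (DB.var n)) = DB.var := ups_var
    rw [e] at this
    exact this

abbrev SJ := ReflTransGen (StepJ true)

theorem SJ.of {Γ M M'} (h : ST M M') : SJ (Γ, M) (Γ, M') :=
  starLift (fun X => (Γ, X)) (fun _ _ h => .step h) h

theorem ctx_clean (Δ : List ℕ) : ∀ {Γ M T}, Nf (Δ ++ Γ) M T →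
    (∀ q, fr T (Δ.length + q) → ∃ b, Idx Γ b q) →
    ∃ Θ M', SJ (Δ ++ Γ, M) (Θ, M') ∧ Nf Θ M' T ∧ ∀ q, fr T q → ∃ b, Idx Θ b q := by
  induction Δ using List.reverseRecOn with
  | nil => intro Γ M T h hg; exact ⟨Γ, M, .refl, h, fun q hq => hg q (by simpa using hq)⟩
  | append_singleton Δ a ih =>
    intro Γ M T h hg
    have hg' : ∀ q, fr T (Δ.length + (q + 1)) → ∃ b, Idx Γ b q := by
      intro q hq
      apply hg
      rw [List.length_append, List.length_singleton]
      rwa [show Δ.length + 1 + q = Δ.length + (q + 1) by omega]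
    have hl := nf_lamCtx _ h
    rw [List.append_assoc, List.singleton_append] at h
    rw [List.append_assoc, List.singleton_append]
    by_cases hbad : ∃ q, fr T (Δ.length + (q + 1)) ∧ Idx Γ a q
    · obtain ⟨q, hq, hi⟩ := hbad
      obtain ⟨b, hb⟩ := fresh Γ
      obtain ⟨s', r1, n1⟩ := nfS_uparrow Δ (nfS_rename Γ a b)
      obtain ⟨M', r2, n2⟩ := h.clos wk_isVar n1
      rw [sb_var] at n2
      obtain ⟨Θ, M'', r3, n3, g3⟩ := ih n2 (by
        intro q hq
        cases q with
        | zero => exact ⟨b, .zero⟩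
        | succ q =>
          obtain ⟨c, hc⟩ := hg' q hq
          exact ⟨c, .succ (fun e => hb (e ▸ hc.mem)) hc⟩)
      refine ⟨Θ, M'', ReflTransGen.head (.alpha2 (b := b) ?_ ?_)
        ((SJ.of ((ST.clos r1 .refl).trans r2)).trans r3), n3, g3⟩
      · refine hl.fv_idx (q := q) ?_ hi
        rw [fr_lams, List.length_append, List.length_singleton]
        rwa [show Δ.length + 1 + q = Δ.length + (q + 1) by omega]
      · intro i hi; exact hb (hl.fv_sub hi)
    · exact ih h (by
        intro q hq
        cases q with
        | zero => exact ⟨a, .zero⟩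
        | succ q =>
          obtain ⟨c, hc⟩ := hg' q hq
          exact ⟨c, .succ (fun e => hbad ⟨q, hq, e ▸ hc⟩) hc⟩)

theorem Nf.bound {Γ M T} (h : Nf Γ M T) {q} (hq : fr T q) : q < Γ.length := by
  obtain ⟨b, i, m, _, e, hi⟩ := h.fv_pos q hq
  have h1 := hi.get
  rw [List.getElem?_drop] at h1
  have := (List.getElem?_eq_some_iff.1 h1).1
  omega

theorem full {Γ M U} (h : TrTm Γ M U) : ∃ Θ L, SJ (Γ, M) (Θ, L) ∧ Pu Θ L (dT U) := by
  obtain ⟨M1, r1, n1⟩ := norm h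
  have n1' : Nf (Γ ++ []) M1 (dT U) := by simpa using n1
  obtain ⟨Θ, M2, r2, n2, g2⟩ := ctx_clean Γ n1' (by
    intro q hq
    have := n1.bound hq
    omega)
  obtain ⟨L, r3, p⟩ := Pu.exists_of_nf _ n2 g2
  rw [List.append_nil] at r2
  exact ⟨Θ, L, ((SJ.of r1).trans r2).trans (SJ.of r3), p⟩

/-! ### Pure terms -/

theorem dT_emb (T : DB) : dT (emb T) = T := by
  induction T with
  | var n => exact dT_dbr n
  | app T S h1 h2 => simp [emb, dT, h1, h2]
  | lam T h => simp [emb, dT, h]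

theorem Pu.tr {Γ L T} (h : Pu Γ L T) : TrTm Γ L (emb T) := by
  induction h with
  | var hi => exact tr_var_idx hi
  | app _ _ h1 h2 => exact .app h1 h2
  | lam _ h => exact .lam h

theorem Pu.step {T T'} (hb : Bt T T') : ∀ {Γ L}, Pu Γ L T →
    ∃ L' U', StepTm true L L' ∧ TrTm Γ L' U' ∧ dT U' = T' := by
  induction hb with
  | @beta T S =>
    intro Γ L h
    cases h with
    | app h1 h2 =>
      cases h1 with
      | lam h1 =>
        exact ⟨_, _, .beta, .clos (.cons _ (.id _) h2.tr) h1.tr, by simp [dT, dS, dT_emb]⟩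
  | lam _ ih =>
    intro Γ L h
    cases h with
    | lam h =>
      obtain ⟨L', U', s, t, e⟩ := ih h
      exact ⟨_, _, .lamCong s, .lam t, by simp [dT, e]⟩
  | appL _ ih =>
    intro Γ L h
    cases h with
    | app h h2 =>
      obtain ⟨L', U', s, t, e⟩ := ih h
      exact ⟨_, _, .appL s, .app t h2.tr, by simp [dT, e, dT_emb]⟩
  | appR _ ih =>
    intro Γ L h
    cases h with
    | app h2 h =>
      obtain ⟨L', U', s, t, e⟩ := ih h
      exact ⟨_, _, .appR s, .app h2.tr t, by simp [dT, e, dT_emb]⟩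

theorem lift_all {Γ M U T} (h : TrTm Γ M U) (hr : Bts (dT U) T) :
    ∃ Θ L, SJ (Γ, M) (Θ, L) ∧ Pu Θ L T := by
  induction hr with
  | refl => exact full h
  | tail _ hb ih =>
    obtain ⟨Θ, L, r, p⟩ := ih
    obtain ⟨L', U', s, t, e⟩ := p.step hb
    obtain ⟨Θ', L'', r', p'⟩ := full t
    exact ⟨Θ', L'', (r.tail (.step s)).trans r', e ▸ p'⟩

inductive PT : Tm → Prop
  | var {b} : PT (.var b)
  | app {M N} : PT M → PT N → PT (.app M N)
  | lam {a M} : PT M → PT (.lam a M)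

theorem Pu.pt {Γ L T} (h : Pu Γ L T) : PT L := by
  induction h with
  | var _ => exact .var
  | app _ _ h1 h2 => exact .app h1 h2
  | lam _ h => exact .lam h

theorem PT.lamCtx (Δ : List ℕ) : ∀ {M}, PT M → PT (lamCtx Δ M) := by
  induction Δ with
  | nil => intro M h; exact h
  | cons a Δ ih => intro M h; exact ih h.lam

theorem PT.fv {M} (h : PT M) : ∀ i, FV M (i + 1) = ∅ := by
  induction h with
  | var => intro i; simp [FV]
  | app _ _ h1 h2 => intro i; simp [FV, h1, h2]
  | lam _ h => intro i; simp [FV, Olam, h]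

theorem PT.not_mem {a M} (h : PT M) : ¬ ∃ i, a ∈ FV (.lam a M) i := by
  rintro ⟨i, hi⟩
  cases i with
  | zero => simp [FV, Olam, h.fv 0] at hi
  | succ i => simp [FV, Olam, h.fv (i + 1)] at hi

theorem PT.nf {M} (h : PT M) : ∀ N, ¬ StepTm false M N := by
  induction h with
  | var => intro N h; cases h
  | app _ _ h1 h2 =>
    intro N h
    cases h with
    | appL h => exact h1 _ h
    | appR h => exact h2 _ h
  | lam hM ih =>
    intro N h
    cases h with
    | alpha1 h _ => exact hM.not_mem h
    | lamCong h => exact ih _ h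

theorem PT.nfJ {Θ M} (h : PT M) : ∀ p, ¬ StepJ false (Θ, M) p := by
  intro p hp
  cases hp with
  | step hs => exact h.nf _ hs
  | alpha2 h1 _ =>
    rw [FVJ, lamCtx_snoc] at h1
    exact (h.lamCtx _).not_mem h1

end LP

/-- lifting of λσ-reductions to λπ: any λσ-reduct of the translation is
tracked by a λπ-reduction of the judgement to a σπα-normal form translating to its
σ-normal form. -/
theorem lsigma_lifts_to_lpi {Γ : List ℕ} {M : Tm} {U V : NTm}
    (hU : TrTm Γ M U) (hred : Relation.ReflTransGen (NStepTm true) U V) :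
    ∃ (Θ : List ℕ) (L : Tm) (V' : NTm),
      Relation.ReflTransGen (NStepTm false) V V' ∧ (∀ W : NTm, ¬ NStepTm false V' W) ∧
      Relation.ReflTransGen (StepJ true) (Γ, M) (Θ, L) ∧
      (∀ p : List ℕ × Tm, ¬ StepJ false (Θ, L) p) ∧
      TrTm Θ L V' := by
  obtain ⟨Θ, L, r, p⟩ := LP.lift_all hU (LP.steps_d hred)
  exact ⟨Θ, L, LP.emb (LP.dT V), LP.nred V, LP.emb_nf _, r, p.pt.nfJ, p.tr⟩
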